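/- arXiv:1704.05377 — 2 statements merged into one kernel-verified Lean document; each statement's English description precedes it below -/
import Mathlib

section
/- Among the numbers Λ_n, n ≥ 1, at most finitely many are zero. Moreover there exist an index n₀ and a number a₀ > 0 such that |Λ_n| ≥ a₀ n^{-2} for all n ≥ n₀. -/
open Real Set

noncomputable section

/-!
As `m → ∞` the kernels `m e^{-m(b-s)}` on `(a, b)` have mass tending to `1` and concentrate at the
right endpoint, so `m ∫ₐᵇ e^{-m(b-s)} r(s) ds` tends to the left limit of `r` at `b`. When this
limit is nonzero, the norm of the integral is therefore bounded below by a constant multiple of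
`1 / m` for large `m`; the numbers `Λ_n` are the case `m = n²`.
-/

open Filter MeasureTheory Topology

section ExponentialKernel

variable {a b δ : ℝ}

lemma integral_mul_exp_neg_mul_sub (a b m : ℝ) :
    ∫ s in a..b, m * exp (-m * (b - s)) = 1 - exp (-m * (b - a)) := by
  have hderiv : ∀ s ∈ uIcc a b,
      HasDerivAt (fun s ↦ exp (-m * (b - s))) (m * exp (-m * (b - s))) s := fun s _ ↦
    (((hasDerivAt_id' s).const_sub b).const_mul (-m)).exp.congr_deriv (by ring)
  rw [intervalIntegral.integral_eq_sub_of_hasDerivAt hderiv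
    (Continuous.intervalIntegrable (by fun_prop) a b)]
  simp

lemma tendsto_mul_exp_neg_mul_atTop (hδ : 0 < δ) :
    Tendsto (fun m : ℝ ↦ m * exp (-m * δ)) atTop (𝓝 0) := by
  simpa [mul_comm] using tendsto_rpow_mul_exp_neg_mul_atTop_nhds_zero 1 δ hδ

lemma tendsto_integral_mul_exp_neg_mul_sub (hab : a < b) :
    Tendsto (fun m : ℝ ↦ ∫ s in a..b, m * exp (-m * (b - s))) atTop (𝓝 1) := by
  have hexp : Tendsto (fun m : ℝ ↦ exp (-m * (b - a))) atTop (𝓝 0) :=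
    tendsto_exp_atBot.comp (tendsto_neg_atTop_atBot.atBot_mul_const (sub_pos.2 hab))
  simpa only [integral_mul_exp_neg_mul_sub, sub_zero] using hexp.const_sub 1

lemma tendstoUniformlyOn_mul_exp_neg_mul_sub (hδ : 0 < δ) :
    TendstoUniformlyOn (fun m s : ℝ ↦ m * exp (-m * (b - s))) 0 atTop (Iic (b - δ)) := by
  rw [Metric.tendstoUniformlyOn_iff]
  intro ε hε
  filter_upwards [(tendsto_mul_exp_neg_mul_atTop hδ).eventually_lt_const hε,
    eventually_ge_atTop 0] with m hmε hm s hs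
  have hδs : δ ≤ b - s := le_sub_comm.1 hs
  calc dist (0 : ℝ) (m * exp (-m * (b - s)))
      = m * exp (-m * (b - s)) := by rw [dist_zero_left, norm_of_nonneg (by positivity)]
    _ ≤ m * exp (-m * δ) := by
      simp only [neg_mul]
      gcongr
    _ < ε := hmε

theorem tendsto_smul_integral_exp_neg_mul_sub_smul {E : Type*} [NormedAddCommGroup E]
    [NormedSpace ℝ E] [CompleteSpace E] {r : ℝ → E} {c : E} (hab : a < b)
    (hr : IntervalIntegrable r volume a b) (hc : Tendsto r (𝓝[<] b) (𝓝 c)) :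
    Tendsto (fun m : ℝ ↦ m • ∫ s in a..b, exp (-m * (b - s)) • r s) atTop (𝓝 c) := by
  have hpeak : Tendsto (fun m : ℝ ↦ ∫ s in Ioo a b, (m * exp (-m * (b - s))) • r s)
      atTop (𝓝 c) := by
    refine tendsto_setIntegral_peak_smul_of_integrableOn_of_tendsto (x₀ := b)
      measurableSet_Ioo measurableSet_Ioo subset_rfl self_mem_nhdsWithin measure_Ioo_lt_top.ne
      ?_ ?_ ?_ ?_ ((intervalIntegrable_iff_integrableOn_Ioo_of_le hab.le).1 hr) ?_
    · filter_upwards [eventually_ge_atTop 0] with m hm s _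
      positivity
    · intro u hu hbu
      obtain ⟨δ, hδ, hball⟩ := Metric.isOpen_iff.1 hu b hbu
      refine (tendstoUniformlyOn_mul_exp_neg_mul_sub hδ).mono fun s hs ↦ ?_
      by_contra! hlt
      simp only [mem_Iic, not_le] at hlt
      exact hs.2 (hball (by rw [Real.ball_eq_Ioo]; exact ⟨hlt, by linarith [hs.1.2]⟩))
    · simpa only [intervalIntegral.integral_of_le hab.le, integral_Ioc_eq_integral_Ioo] using
        tendsto_integral_mul_exp_neg_mul_sub hab
    · exact .of_forall fun m ↦ Continuous.aestronglyMeasurable (by fun_prop)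
    · exact hc.mono_left (nhdsWithin_mono b Ioo_subset_Iio_self)
  simpa only [intervalIntegral.integral_of_le hab.le, integral_Ioc_eq_integral_Ioo, mul_smul,
    integral_smul] using hpeak

end ExponentialKernel

lemma exists_eventually_div_norm_le_of_tendsto_smul {ι 𝕜 E : Type*} [NormedField 𝕜]
    [NormedAddCommGroup E] [NormedSpace 𝕜 E] {l : Filter ι} {f : ι → 𝕜} {v : ι → E} {c : E}
    (hfv : Tendsto (fun i ↦ f i • v i) l (𝓝 c)) (hc : c ≠ 0) :
    ∃ k > 0, ∀ᶠ i in l, k / ‖f i‖ ≤ ‖v i‖ := by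
  have hc_norm : 0 < ‖c‖ := norm_pos_iff.2 hc
  refine ⟨‖c‖ / 2, half_pos hc_norm, ?_⟩
  filter_upwards [hfv.norm.eventually_const_le (half_lt_self hc_norm)] with i hi
  rw [norm_smul, mul_comm] at hi
  exact div_le_of_le_mul₀ (norm_nonneg _) (norm_nonneg _) hi

theorem lambda_lemma_general {E : Type*} [NormedAddCommGroup E] [NormedSpace ℝ E]
    [CompleteSpace E] {a b : ℝ} (hab : a < b) {r : ℝ → E}
    (hr : IntervalIntegrable r volume a b) {c : E} (hrc : Tendsto r (𝓝[<] b) (𝓝 c)) (hc : c ≠ 0)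
    {ν : ℕ → ℝ} (hν : Tendsto ν atTop atTop) {Λ : ℕ → E}
    (hΛ : ∀ n, Λ n = ∫ s in a..b, exp (-ν n * (b - s)) • r s) :
    {n | Λ n = 0}.Finite ∧ ∃ n₀, ∃ a₀ > 0, ∀ n, n₀ ≤ n → a₀ / ν n ≤ ‖Λ n‖ := by
  have hlim : Tendsto (fun n ↦ ν n • Λ n) atTop (𝓝 c) := by
    simpa only [hΛ, Function.comp_def] using
      (tendsto_smul_integral_exp_neg_mul_sub_smul hab hr hrc).comp hν
  constructor
  · have hne : ∀ᶠ n in cofinite, Λ n ≠ 0 := by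
      rw [Nat.cofinite_eq_atTop]
      exact (hlim.eventually_ne hc).mono fun n ↦ right_ne_zero_of_smul
    simpa only [ne_eq, not_not] using eventually_cofinite.1 hne
  · obtain ⟨a₀, ha₀, hbound⟩ := exists_eventually_div_norm_le_of_tendsto_smul hlim hc
    obtain ⟨n₀, hn₀⟩ := eventually_atTop.1 (hbound.and (hν.eventually_ge_atTop 0))
    refine ⟨n₀, a₀, ha₀, fun n hn ↦ ?_⟩
    obtain ⟨hle, hν_nonneg⟩ := hn₀ n hn
    rwa [norm_of_nonneg hν_nonneg] at hle

/-- **Lemma (§2).** Among the numbers `Λ_n = ∫₀^{t₀} e^{-n²(t₀-s)} r₀(s) ds`, `n ≥ 1`,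
at most finitely many vanish; moreover `|Λ_n| ≥ a₀ n⁻²` for all large `n`. -/
theorem lambda_lemma
    (T : ℝ) (hT : 0 < T)
    (r0 : ℝ → ℝ) (hr0 : ContinuousOn r0 (Icc 0 T))
    (t₀ : ℝ) (ht₀ : t₀ ∈ Ioc 0 T) (hr0t₀ : r0 t₀ ≠ 0)
    (Λ : ℕ → ℝ)
    (hΛ : ∀ n : ℕ, Λ n = ∫ s in (0:ℝ)..t₀, exp (-(n:ℝ) ^ 2 * (t₀ - s)) * r0 s) :
    {n : ℕ | 1 ≤ n ∧ Λ n = 0}.Finite ∧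
    ∃ n₀ : ℕ, ∃ a₀ > (0:ℝ), ∀ n : ℕ, n₀ ≤ n → a₀ / (n:ℝ) ^ 2 ≤ |Λ n| := by
  have hcont : ContinuousOn r0 (Icc 0 t₀) := hr0.mono (Icc_subset_Icc_right ht₀.2)
  have hleft : Tendsto r0 (𝓝[<] t₀) (𝓝 (r0 t₀)) := by
    rw [← nhdsWithin_Ioo_eq_nhdsLT ht₀.1]
    exact (hcont t₀ (right_mem_Icc.2 ht₀.1.le)).mono Ioo_subset_Icc_self
  have hsq : Tendsto (fun n : ℕ ↦ (n : ℝ) ^ 2) atTop atTop :=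
    (tendsto_pow_atTop two_ne_zero).comp tendsto_natCast_atTop_atTop
  obtain ⟨hfinite, hbound⟩ := lambda_lemma_general ht₀.1
    (hcont.intervalIntegrable_of_Icc ht₀.1.le) hleft hr0t₀ hsq hΛ
  exact ⟨hfinite.subset fun _ hn ↦ hn.2, hbound⟩
end
end

section
/- For every x₀ ∈ (0,π), the series K(t,s) := −Σ_{n≥1} n² f_n(s) e^{-n²(t-s)} sin(n x₀) converges uniformly on the triangle {(t,s) : 0 ≤ s ≤ t ≤ T}, and the function K is continuous there. -/
open Real Set

noncomputable section

/-!
Three integrations by parts, whose boundary terms vanish by the hypotheses on `f` and `∂²f/∂x²`,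
turn `n³ fₙ(s)` into a cosine coefficient of `∂³f/∂x³(·, s)`. Bessel's inequality then bounds
`∑ (n³ fₙ(s))²` uniformly in `s`. Since `0 ≤ e^{-n²(t-s)} ≤ 1` on the triangle, the `n`-th term of
the series is at most `n⁻¹ · |n³ fₙ(s)|`, and by the Cauchy–Schwarz inequality the tails are
uniformly small because `∑ n⁻²` converges. A uniform limit of continuous functions is continuous.
-/

open MeasureTheory Filter

section CauchySchwarzTest

variable {ι E : Type*} [NormedAddCommGroup E]

lemma sum_norm_le_sqrt_tsum_mul_sqrt {f : ι → E} {u v : ι → ℝ} {C : ℝ}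
    (hu : Summable fun i => u i ^ 2) (hv : ∀ t : Finset ι, ∑ i ∈ t, v i ^ 2 ≤ C)
    (hf : ∀ i, ‖f i‖ ≤ u i * v i) (t : Finset ι) :
    ∑ i ∈ t, ‖f i‖ ≤ √(∑' i, u i ^ 2) * √C :=
  calc ∑ i ∈ t, ‖f i‖ ≤ ∑ i ∈ t, u i * v i := Finset.sum_le_sum fun i _ => hf i
    _ ≤ √(∑ i ∈ t, u i ^ 2) * √(∑ i ∈ t, v i ^ 2) := Real.sum_mul_le_sqrt_mul_sqrt t u v
    _ ≤ √(∑' i, u i ^ 2) * √C := by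
      gcongr
      · exact hu.sum_le_tsum t fun i _ => sq_nonneg (u i)
      · exact hv t

/-- Unlike in the Weierstrass test, the terms need not have summable sup norms: `v i` may peak at a
different point for each `i`. -/
theorem hasSumUniformlyOn_of_norm_le_mul [CompleteSpace E] {β : Type*} {F : ι → β → E}
    {u : ι → ℝ} {v : ι → β → ℝ} {C : ℝ} {s : Set β} (hu : Summable fun i => u i ^ 2)
    (hv : ∀ y ∈ s, ∀ t : Finset ι, ∑ i ∈ t, v i y ^ 2 ≤ C)
    (hF : ∀ i, ∀ y ∈ s, ‖F i y‖ ≤ u i * v i y) :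
    HasSumUniformlyOn F (fun y => ∑' i, F i y) s := by
  rw [hasSumUniformlyOn_iff_tendstoUniformlyOn, Metric.tendstoUniformlyOn_iff]
  intro ε hε
  have tail_tendsto : Tendsto (fun t : Finset ι => √(∑' i : {i // i ∉ t}, u i ^ 2) * √C)
      atTop (nhds 0) := by
    simpa using ((tendsto_tsum_compl_atTop_zero fun i => u i ^ 2).sqrt.mul_const √C)
  filter_upwards [tail_tendsto.eventually_lt_const hε] with t ht y hy
  have summable_norm : Summable fun i => ‖F i y‖ :=
    summable_of_sum_le (fun _ => norm_nonneg _)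
      (sum_norm_le_sqrt_tsum_mul_sqrt hu (hv y hy) fun i => hF i y hy)
  have tail_sq_le (r : Finset {i // i ∉ t}) : ∑ i ∈ r, v i y ^ 2 ≤ C := by
    simpa using hv y hy (r.map (Function.Embedding.subtype _))
  rw [dist_eq_norm, ← summable_norm.of_norm.sum_add_tsum_subtype_compl t, add_sub_cancel_left]
  calc ‖∑' i : {i // i ∉ t}, F i y‖ ≤ ∑' i : {i // i ∉ t}, ‖F i y‖ :=
        norm_tsum_le_tsum_norm (summable_norm.subtype _)
    _ ≤ √(∑' i : {i // i ∉ t}, u i ^ 2) * √C :=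
        Real.tsum_le_of_sum_le (fun _ => norm_nonneg _)
          (sum_norm_le_sqrt_tsum_mul_sqrt (hu.subtype _) tail_sq_le fun i => hF i y hy)
    _ < ε := ht

end CauchySchwarzTest

section ParametricIntegral

variable {X : Type*} [TopologicalSpace X] {S : Set X} {a b : ℝ}

lemma continuousOn_intervalIntegral_of_continuousOn {E : Type*} [NormedAddCommGroup E]
    [NormedSpace ℝ E] {μ : Measure ℝ} [NullSingletonClass μ] [IsLocallyFiniteMeasure μ]
    {g : ℝ → X → E}
    (hg : ContinuousOn (fun p : ℝ × X => g p.1 p.2) (uIcc a b ×ˢ S)) :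
    ContinuousOn (fun t => ∫ x in a..b, g x t ∂μ) S := by
  rw [continuousOn_iff_continuous_domRestrict]
  let clamp (x : ℝ) : ℝ := projIcc (a ⊓ b) (a ⊔ b) inf_le_sup x
  have clamp_continuous : Continuous clamp := continuous_subtype_val.comp continuous_projIcc
  have extension_continuous : Continuous fun p : S × ℝ => g (clamp p.2) p.1 :=
    hg.comp_continuous (f := fun p : S × ℝ => (clamp p.2, (p.1 : X))) (by fun_prop)
      fun p => ⟨Subtype.coe_prop _, p.1.2⟩
  refine (intervalIntegral.continuous_parametric_intervalIntegral_of_continuous' (μ := μ)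
    (f := fun (t : S) x => g (clamp x) t) extension_continuous a b).congr fun t =>
      intervalIntegral.integral_congr fun x hx => ?_
  simp only [clamp, projIcc_of_mem inf_le_sup hx]

lemma exists_forall_memLp_two_and_integral_sq_le {g : ℝ → X → ℝ} (hab : a ≤ b)
    (hS : IsCompact S) (hg : ContinuousOn (fun p : ℝ × X => g p.1 p.2) (Icc a b ×ˢ S)) :
    ∃ C, ∀ t ∈ S, MemLp (fun x => g x t) 2 (volume.restrict (Ioc a b)) ∧
      ∫ x in a..b, g x t ^ 2 ≤ C := by
  rw [← uIcc_of_le hab] at hg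
  obtain ⟨C, hC⟩ := hS.exists_bound_of_continuousOn
    (continuousOn_intervalIntegral_of_continuousOn (μ := volume)
      (g := fun x t => g x t ^ 2) (hg.pow 2))
  refine ⟨C, fun t ht => ⟨?_, (le_abs_self _).trans (hC t ht)⟩⟩
  have slice_continuous : ContinuousOn (fun x => g x t) (uIcc a b) :=
    hg.comp (f := fun x => (x, t)) (by fun_prop) fun x hx => ⟨hx, ht⟩
  rw [memLp_two_iff_integrable_sq slice_continuous.intervalIntegrable.1.aestronglyMeasurable]
  exact (slice_continuous.pow 2).intervalIntegrable.1

end ParametricIntegral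

section Bessel

lemma inner_toLp_toLp {α : Type*} [MeasurableSpace α] {μ : Measure α} {g h : α → ℝ}
    (hg : MemLp g 2 μ) (hh : MemLp h 2 μ) :
    inner ℝ (hg.toLp g) (hh.toLp h) = ∫ x, h x * g x ∂μ := by
  rw [L2.inner_def]
  refine integral_congr_ae ?_
  filter_upwards [hg.coeFn_toLp, hh.coeFn_toLp] with x hgx hhx
  rw [hgx, hhx]
  rfl

theorem sum_sq_integral_mul_le_integral_sq {α ι : Type*} [MeasurableSpace α] {μ : Measure α}
    [DecidableEq ι] {φ : ι → α → ℝ} {g : α → ℝ} (hφ : ∀ i, MemLp (φ i) 2 μ)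
    (orthonormal : ∀ i j, ∫ x, φ i x * φ j x ∂μ = if i = j then 1 else 0)
    (hg : MemLp g 2 μ) (s : Finset ι) :
    ∑ i ∈ s, (∫ x, g x * φ i x ∂μ) ^ 2 ≤ ∫ x, g x ^ 2 ∂μ := by
  have toLp_orthonormal : Orthonormal ℝ fun i => (hφ i).toLp (φ i) := by
    rw [orthonormal_iff_ite]
    intro i j
    rw [inner_toLp_toLp, orthonormal j i]
    simp only [eq_comm]
  have bessel := toLp_orthonormal.sum_inner_products_le (hg.toLp g) (s := s)
  simpa only [inner_toLp_toLp, norm_eq_abs, sq_abs, ← real_inner_self_eq_norm_sq, ← sq] using bessel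

lemma integral_cos_int_mul_zero_pi {k : ℤ} (hk : k ≠ 0) : ∫ x in 0..π, cos (k * x) = 0 := by
  rw [intervalIntegral.integral_comp_mul_left cos (Int.cast_ne_zero.2 hk), integral_cos]
  simp [sin_int_mul_pi]

lemma integral_cos_mul_cos_zero_pi (n m : ℕ) :
    ∫ x in 0..π, cos ((n + 1 : ℕ) * x) * cos ((m + 1 : ℕ) * x) = if n = m then π / 2 else 0 := by
  have product_to_sum (x : ℝ) : cos ((n + 1 : ℕ) * x) * cos ((m + 1 : ℕ) * x) =
      1 / 2 * (cos ((n - m : ℤ) * x) + cos ((n + m + 2 : ℤ) * x)) := by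
    have := two_mul_cos_mul_cos ((n + 1 : ℕ) * x) ((m + 1 : ℕ) * x)
    push_cast at this ⊢
    rw [show ((n : ℝ) - m) * x = (n + 1) * x - (m + 1) * x by ring,
      show ((n : ℝ) + m + 2) * x = (n + 1) * x + (m + 1) * x by ring]
    linarith
  simp_rw [product_to_sum]
  rw [intervalIntegral.integral_const_mul, intervalIntegral.integral_add
    (Continuous.intervalIntegrable (by fun_prop) _ _)
    (Continuous.intervalIntegrable (by fun_prop) _ _),
    integral_cos_int_mul_zero_pi (by omega : (n + m + 2 : ℤ) ≠ 0), add_zero]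
  split_ifs with hnm
  · subst hnm
    simp only [sub_self, Int.cast_zero, zero_mul, cos_zero, intervalIntegral.integral_const,
      sub_zero, smul_eq_mul, mul_one]
    ring
  · rw [integral_cos_int_mul_zero_pi (by omega), mul_zero]

theorem sum_sq_integral_mul_cos_le {g : ℝ → ℝ} (hg : MemLp g 2 (volume.restrict (Ioc 0 π)))
    (s : Finset ℕ) :
    ∑ n ∈ s, (∫ x in 0..π, g x * cos ((n + 1 : ℕ) * x)) ^ 2 ≤ π / 2 * ∫ x in 0..π, g x ^ 2 := by
  have sqrt_sq : √(2 / π) ^ 2 = 2 / π := sq_sqrt (by positivity)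
  let φ (n : ℕ) (x : ℝ) : ℝ := √(2 / π) * cos ((n + 1 : ℕ) * x)
  have φ_memLp (n : ℕ) : MemLp (φ n) 2 (volume.restrict (Ioc 0 π)) :=
    (MemLp.of_bound (by fun_prop) 1 <| ae_of_all _ fun x => abs_cos_le_one _).const_mul _
  have φ_orthonormal (n m : ℕ) :
      ∫ x in Ioc 0 π, φ n x * φ m x = if n = m then 1 else 0 := by
    have φ_mul_φ (x : ℝ) :
        φ n x * φ m x = 2 / π * (cos ((n + 1 : ℕ) * x) * cos ((m + 1 : ℕ) * x)) := by
      rw [mul_mul_mul_comm, ← sq, sqrt_sq]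
    simp only [φ_mul_φ, integral_const_mul]
    rw [← intervalIntegral.integral_of_le pi_pos.le, integral_cos_mul_cos_zero_pi]
    rw [mul_ite, mul_zero, div_mul_div_cancel₀ pi_ne_zero, div_self two_ne_zero]
  have bessel := sum_sq_integral_mul_le_integral_sq φ_memLp φ_orthonormal hg s
  simp only [φ, mul_left_comm _ √(2 / π), integral_const_mul, mul_pow, sqrt_sq, ← Finset.mul_sum]
    at bessel
  simp only [intervalIntegral.integral_of_le pi_pos.le]
  calc _ = π / 2 * (2 / π * ∑ n ∈ s, (∫ x in Ioc 0 π, g x * cos ((n + 1 : ℕ) * x)) ^ 2) := by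
        field_simp
    _ ≤ π / 2 * ∫ x in Ioc 0 π, g x ^ 2 := by gcongr

end Bessel

section SineCoefficients

variable {u u' : ℝ → ℝ} {a b k : ℝ}

lemma integral_mul_sin_eq_integral_deriv_mul_cos
    (hu : ∀ x ∈ uIcc a b, HasDerivWithinAt u (u' x) (uIcc a b) x)
    (hu' : IntervalIntegrable u' volume a b) (hk : k ≠ 0) :
    ∫ x in a..b, u x * sin (k * x) =
      (u a * cos (k * a) - u b * cos (k * b) + ∫ x in a..b, u' x * cos (k * x)) / k := by
  have hv (x : ℝ) : HasDerivAt (fun x => -cos (k * x) / k) (sin (k * x)) x := by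
    refine ((((hasDerivAt_id x).const_mul k).cos.neg).div_const k).congr_deriv ?_
    simp [hk]
  rw [intervalIntegral.integral_mul_deriv_eq_deriv_mul_of_hasDerivWithinAt hu
    (fun x _ => (hv x).hasDerivWithinAt) hu' (Continuous.intervalIntegrable (by fun_prop) _ _)]
  simp only [mul_div_assoc', mul_neg, neg_div, intervalIntegral.integral_neg,
    intervalIntegral.integral_div]
  ring

lemma integral_mul_cos_eq_integral_deriv_mul_sin
    (hu : ∀ x ∈ uIcc a b, HasDerivWithinAt u (u' x) (uIcc a b) x)
    (hu' : IntervalIntegrable u' volume a b) (hk : k ≠ 0) :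
    ∫ x in a..b, u x * cos (k * x) =
      (u b * sin (k * b) - u a * sin (k * a) - ∫ x in a..b, u' x * sin (k * x)) / k := by
  have hv (x : ℝ) : HasDerivAt (fun x => sin (k * x) / k) (cos (k * x)) x := by
    refine (((hasDerivAt_id x).const_mul k).sin.div_const k).congr_deriv ?_
    simp [hk]
  rw [intervalIntegral.integral_mul_deriv_eq_deriv_mul_of_hasDerivWithinAt hu
    (fun x _ => (hv x).hasDerivWithinAt) hu' (Continuous.intervalIntegrable (by fun_prop) _ _)]
  simp only [mul_div_assoc', intervalIntegral.integral_div]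
  ring

/-- The `n`-th coefficient of the Fourier sine series of `u` on `[0, π]`. -/
def sineCoeff (u : ℝ → ℝ) (n : ℕ) : ℝ := 2 / π * ∫ x in 0..π, u x * sin (n * x)

variable {u₁ u₂ u₃ : ℝ → ℝ}

lemma cube_mul_sineCoeff (hu : ∀ x ∈ Icc 0 π, HasDerivWithinAt u (u₁ x) (Icc 0 π) x)
    (hu₁ : ∀ x ∈ Icc 0 π, HasDerivWithinAt u₁ (u₂ x) (Icc 0 π) x)
    (hu₂ : ∀ x ∈ Icc 0 π, HasDerivWithinAt u₂ (u₃ x) (Icc 0 π) x)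
    (hu₃ : IntervalIntegrable u₃ volume 0 π) (u_zero : u 0 = 0) (u_pi : u π = 0)
    (u₂_zero : u₂ 0 = 0) (u₂_pi : u₂ π = 0) {n : ℕ} (hn : n ≠ 0) :
    (n : ℝ) ^ 3 * sineCoeff u n = -(2 / π * ∫ x in 0..π, u₃ x * cos (n * x)) := by
  rw [← uIcc_of_le pi_pos.le] at hu hu₁ hu₂
  have hn' : (n : ℝ) ≠ 0 := Nat.cast_ne_zero.2 hn
  have u₁_integrable : IntervalIntegrable u₁ volume 0 π :=
    ContinuousOn.intervalIntegrable fun x hx => (hu₁ x hx).continuousWithinAt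
  have u₂_integrable : IntervalIntegrable u₂ volume 0 π :=
    ContinuousOn.intervalIntegrable fun x hx => (hu₂ x hx).continuousWithinAt
  rw [sineCoeff, integral_mul_sin_eq_integral_deriv_mul_cos hu u₁_integrable hn',
    integral_mul_cos_eq_integral_deriv_mul_sin hu₁ u₂_integrable hn',
    integral_mul_sin_eq_integral_deriv_mul_cos hu₂ hu₃ hn', u_zero, u_pi, u₂_zero, u₂_pi,
    sin_nat_mul_pi, mul_zero (n : ℝ), sin_zero]
  field_simp
  ring

theorem sum_sq_cube_mul_sineCoeff_le
    (hu : ∀ x ∈ Icc 0 π, HasDerivWithinAt u (u₁ x) (Icc 0 π) x)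
    (hu₁ : ∀ x ∈ Icc 0 π, HasDerivWithinAt u₁ (u₂ x) (Icc 0 π) x)
    (hu₂ : ∀ x ∈ Icc 0 π, HasDerivWithinAt u₂ (u₃ x) (Icc 0 π) x)
    (hu₃ : MemLp u₃ 2 (volume.restrict (Ioc 0 π))) (u_zero : u 0 = 0) (u_pi : u π = 0)
    (u₂_zero : u₂ 0 = 0) (u₂_pi : u₂ π = 0) (s : Finset ℕ) :
    ∑ n ∈ s, (((n + 1 : ℕ) : ℝ) ^ 3 * sineCoeff u (n + 1)) ^ 2 ≤
      2 / π * ∫ x in 0..π, u₃ x ^ 2 := by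
  have u₃_integrable : IntervalIntegrable u₃ volume 0 π :=
    (intervalIntegrable_iff_integrableOn_Ioc_of_le pi_pos.le).2 (hu₃.integrable one_le_two)
  simp only [cube_mul_sineCoeff hu hu₁ hu₂ u₃_integrable u_zero u_pi u₂_zero u₂_pi
    (Nat.succ_ne_zero _), neg_sq, mul_pow, ← Finset.mul_sum]
  calc _ ≤ (2 / π) ^ 2 * (π / 2 * ∫ x in 0..π, u₃ x ^ 2) := by
        gcongr
        exact sum_sq_integral_mul_cos_le hu₃ s
    _ = 2 / π * ∫ x in 0..π, u₃ x ^ 2 := by field_simp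

lemma continuousOn_sineCoeff {X : Type*} [TopologicalSpace X] {S : Set X} {g : ℝ → X → ℝ}
    (hg : ContinuousOn (fun p : ℝ × X => g p.1 p.2) (Icc 0 π ×ˢ S)) (n : ℕ) :
    ContinuousOn (fun t => sineCoeff (g · t) n) S := by
  rw [← uIcc_of_le pi_pos.le] at hg
  refine continuousOn_const.mul (continuousOn_intervalIntegral_of_continuousOn (hg.mul ?_))
  fun_prop

end SineCoefficients

section VolterraSeries

/-- The term of mode `n + 1` in the series for `-K(t, s)` at the point `x`, where `q = (t, s)` and
`c k s` plays the role of the sine coefficient `f_k(s)`. -/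
def volterraTerm (c : ℕ → ℝ → ℝ) (x : ℝ) (n : ℕ) (q : ℝ × ℝ) : ℝ :=
  ((n : ℝ) + 1) ^ 2 * c (n + 1) q.2 * exp (-((n : ℝ) + 1) ^ 2 * (q.1 - q.2)) *
    sin (((n : ℝ) + 1) * x)

variable {c : ℕ → ℝ → ℝ} {x : ℝ} {n : ℕ} {S : Set ℝ}

lemma abs_volterraTerm_le {q : ℝ × ℝ} (hq : q.2 ≤ q.1) :
    |volterraTerm c x n q| ≤ 1 / ((n : ℝ) + 1) * |((n + 1 : ℕ) : ℝ) ^ 3 * c (n + 1) q.2| := by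
  have exp_le_one : exp (-((n : ℝ) + 1) ^ 2 * (q.1 - q.2)) ≤ 1 :=
    exp_le_one_iff.2 <| by
      rw [neg_mul]
      exact neg_nonpos.2 (mul_nonneg (sq_nonneg _) (sub_nonneg.2 hq))
  rw [volterraTerm, mul_assoc, abs_mul, abs_mul (exp _), abs_exp]
  calc _ ≤ |((n : ℝ) + 1) ^ 2 * c (n + 1) q.2| * 1 := by
        gcongr
        exact mul_le_one₀ exp_le_one (abs_nonneg _) (abs_sin_le_one _)
    _ = 1 / ((n : ℝ) + 1) * |((n + 1 : ℕ) : ℝ) ^ 3 * c (n + 1) q.2| := by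
        have hn : (0 : ℝ) < n + 1 := by positivity
        rw [← abs_of_pos (one_div_pos.2 hn), ← abs_mul]
        push_cast
        field_simp

lemma continuousOn_volterraTerm (hc : ContinuousOn (c (n + 1)) S) :
    ContinuousOn (volterraTerm c x n) (Prod.snd ⁻¹' S) := by
  have := hc.comp continuousOn_snd (mapsTo_preimage (Prod.snd : ℝ × ℝ → ℝ) S)
  unfold volterraTerm
  exact ((continuousOn_const.mul this).mul (by fun_prop)).mul continuousOn_const

theorem hasSumUniformlyOn_volterraTerm {C : ℝ}
    (hC : ∀ s ∈ S, ∀ t : Finset ℕ, ∑ n ∈ t, (((n + 1 : ℕ) : ℝ) ^ 3 * c (n + 1) s) ^ 2 ≤ C) :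
    HasSumUniformlyOn (volterraTerm c x) (fun q => ∑' n, volterraTerm c x n q)
      {q | q.2 ∈ S ∧ q.2 ≤ q.1} := by
  have summable_sq : Summable fun n : ℕ => (1 / ((n : ℝ) + 1)) ^ 2 := by
    simpa using (summable_nat_add_iff 1).2 (summable_one_div_nat_pow.2 one_lt_two)
  refine hasSumUniformlyOn_of_norm_le_mul (C := C) summable_sq (fun q hq t => ?_)
    fun n q hq => abs_volterraTerm_le hq.2
  simpa only [sq_abs] using hC q.2 hq.1 t

end VolterraSeries

theorem volterra_kernel_continuous_general
    (T C : ℝ)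
    (f f1 f2 f3 : ℝ → ℝ → ℝ)
    (hfc : ContinuousOn (fun p : ℝ × ℝ => f p.1 p.2) (Icc 0 π ×ˢ Icc 0 T))
    (hd1 : ∀ t ∈ Icc (0:ℝ) T, ∀ x ∈ Icc (0:ℝ) π,
      HasDerivWithinAt (fun x' => f x' t) (f1 x t) (Icc 0 π) x)
    (hd2 : ∀ t ∈ Icc (0:ℝ) T, ∀ x ∈ Icc (0:ℝ) π,
      HasDerivWithinAt (fun x' => f1 x' t) (f2 x t) (Icc 0 π) x)
    (hd3 : ∀ t ∈ Icc (0:ℝ) T, ∀ x ∈ Icc (0:ℝ) π,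
      HasDerivWithinAt (fun x' => f2 x' t) (f3 x t) (Icc 0 π) x)
    (hf3 : ∀ t ∈ Icc (0:ℝ) T, MemLp (fun x => f3 x t) 2 (volume.restrict (Ioc 0 π)) ∧
      ∫ x in (0:ℝ)..π, f3 x t ^ 2 ≤ C)
    (hfb : ∀ t ∈ Icc (0:ℝ) T, f 0 t = 0 ∧ f π t = 0 ∧ f2 0 t = 0 ∧ f2 π t = 0)
    (fn : ℕ → ℝ → ℝ)
    (hfn : ∀ n t, fn n t = (2 / π) * ∫ s in (0:ℝ)..π, f s t * sin ((n:ℝ) * s))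
    (x₀ : ℝ)
    (K : ℝ → ℝ → ℝ)
    (hK : ∀ t s, K t s = -∑' n : ℕ, ((n:ℝ) + 1) ^ 2 * fn (n + 1) s *
      exp (-((n:ℝ) + 1) ^ 2 * (t - s)) * sin (((n:ℝ) + 1) * x₀)) :
    (∀ t s : ℝ, 0 ≤ s → s ≤ t → t ≤ T →
      Summable fun n : ℕ => ((n:ℝ) + 1) ^ 2 * fn (n + 1) s *
        exp (-((n:ℝ) + 1) ^ 2 * (t - s)) * sin (((n:ℝ) + 1) * x₀)) ∧
    (∀ ε > 0, ∃ N₀ : ℕ, ∀ m ≥ N₀, ∀ t s : ℝ, 0 ≤ s → s ≤ t → t ≤ T →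
      |(-∑ n ∈ Finset.range m, ((n:ℝ) + 1) ^ 2 * fn (n + 1) s *
          exp (-((n:ℝ) + 1) ^ 2 * (t - s)) * sin (((n:ℝ) + 1) * x₀)) - K t s| ≤ ε) ∧
    ContinuousOn (fun q : ℝ × ℝ => K q.1 q.2)
      {q : ℝ × ℝ | 0 ≤ q.2 ∧ q.2 ≤ q.1 ∧ q.1 ≤ T} := by
  have fn_eq (n : ℕ) : fn n = fun t => sineCoeff (f · t) n := funext (hfn n)
  have fn_continuousOn (n : ℕ) : ContinuousOn (fn n) (Icc 0 T) := by
    rw [fn_eq]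
    exact continuousOn_sineCoeff hfc n
  obtain rfl : K = fun t s => -∑' n, volterraTerm fn x₀ n (t, s) := funext₂ hK
  have cubes_bounded : ∀ s ∈ Icc 0 T, ∀ t : Finset ℕ,
      ∑ n ∈ t, (((n + 1 : ℕ) : ℝ) ^ 3 * fn (n + 1) s) ^ 2 ≤ 2 / π * C := by
    intro s hs t
    obtain ⟨f_zero, f_pi, f2_zero, f2_pi⟩ := hfb s hs
    obtain ⟨f3_memLp, f3_sq_le⟩ := hf3 s hs
    simp only [fn_eq]
    exact (sum_sq_cube_mul_sineCoeff_le (hd1 s hs) (hd2 s hs) (hd3 s hs) f3_memLp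
      f_zero f_pi f2_zero f2_pi t).trans (by gcongr)
  have triangle_subset : {q : ℝ × ℝ | 0 ≤ q.2 ∧ q.2 ≤ q.1 ∧ q.1 ≤ T} ⊆
      {q | q.2 ∈ Icc 0 T ∧ q.2 ≤ q.1} := fun q ⟨h0, hst, htT⟩ => ⟨⟨h0, hst.trans htT⟩, hst⟩
  have uniform := (hasSumUniformlyOn_volterraTerm (x := x₀) cubes_bounded).mono triangle_subset
  refine ⟨fun t s h0 hst htT => (uniform.hasSum (x := (t, s)) ⟨h0, hst, htT⟩).summable,
    fun ε hε => ?_, ?_⟩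
  · obtain ⟨N₀, hN₀⟩ := eventually_atTop.1
      (Metric.tendstoUniformlyOn_iff.1 uniform.tendstoUniformlyOn_finsetRange ε hε)
    refine ⟨N₀, fun m hm t s h0 hst htT => ?_⟩
    rw [neg_sub_neg]
    exact (hN₀ m hm (t, s) ⟨h0, hst, htT⟩).le
  · refine (uniform.tendstoUniformlyOn.continuousOn <| .of_forall fun t =>
      continuousOn_finsetSum t fun n _ => ?_).neg
    exact (continuousOn_volterraTerm (fn_continuousOn (n + 1))).mono
      fun q hq => (triangle_subset hq).1

/-- The kernel series `K(t,s) = −Σ n² f_n(s) e^{-n²(t-s)} sin(n x₀)` converges uniformly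
on the triangle `{0 ≤ s ≤ t ≤ T}` and `K` is continuous there. -/
theorem volterra_kernel_continuous
    (T : ℝ) (hT : 0 < T)
    (f f1 f2 f3 : ℝ → ℝ → ℝ)
    (hfc : ContinuousOn (fun p : ℝ × ℝ => f p.1 p.2) (Icc 0 π ×ˢ Icc 0 T))
    (hf1c : ContinuousOn (fun p : ℝ × ℝ => f1 p.1 p.2) (Icc 0 π ×ˢ Icc 0 T))
    (hf2c : ContinuousOn (fun p : ℝ × ℝ => f2 p.1 p.2) (Icc 0 π ×ˢ Icc 0 T))
    (hf3c : ContinuousOn (fun p : ℝ × ℝ => f3 p.1 p.2) (Icc 0 π ×ˢ Icc 0 T))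
    (hd1 : ∀ t ∈ Icc (0:ℝ) T, ∀ x ∈ Icc (0:ℝ) π,
      HasDerivWithinAt (fun x' => f x' t) (f1 x t) (Icc 0 π) x)
    (hd2 : ∀ t ∈ Icc (0:ℝ) T, ∀ x ∈ Icc (0:ℝ) π,
      HasDerivWithinAt (fun x' => f1 x' t) (f2 x t) (Icc 0 π) x)
    (hd3 : ∀ t ∈ Icc (0:ℝ) T, ∀ x ∈ Icc (0:ℝ) π,
      HasDerivWithinAt (fun x' => f2 x' t) (f3 x t) (Icc 0 π) x)
    (hfb : ∀ t ∈ Icc (0:ℝ) T, f 0 t = 0 ∧ f π t = 0 ∧ f2 0 t = 0 ∧ f2 π t = 0)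
    (fn : ℕ → ℝ → ℝ)
    (hfn : ∀ n t, fn n t = (2 / π) * ∫ s in (0:ℝ)..π, f s t * sin ((n:ℝ) * s))
    (x₀ : ℝ) (hx₀ : x₀ ∈ Ioo 0 π)
    (K : ℝ → ℝ → ℝ)
    (hK : ∀ t s, K t s = -∑' n : ℕ, ((n:ℝ) + 1) ^ 2 * fn (n + 1) s *
      exp (-((n:ℝ) + 1) ^ 2 * (t - s)) * sin (((n:ℝ) + 1) * x₀)) :
    -- pointwise summability and uniform convergence on the triangle
    (∀ t s : ℝ, 0 ≤ s → s ≤ t → t ≤ T →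
      Summable fun n : ℕ => ((n:ℝ) + 1) ^ 2 * fn (n + 1) s *
        exp (-((n:ℝ) + 1) ^ 2 * (t - s)) * sin (((n:ℝ) + 1) * x₀)) ∧
    (∀ ε > 0, ∃ N₀ : ℕ, ∀ m ≥ N₀, ∀ t s : ℝ, 0 ≤ s → s ≤ t → t ≤ T →
      |(-∑ n ∈ Finset.range m, ((n:ℝ) + 1) ^ 2 * fn (n + 1) s *
          exp (-((n:ℝ) + 1) ^ 2 * (t - s)) * sin (((n:ℝ) + 1) * x₀)) - K t s| ≤ ε) ∧
    -- continuity of `K` on the triangle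
    ContinuousOn (fun q : ℝ × ℝ => K q.1 q.2)
      {q : ℝ × ℝ | 0 ≤ q.2 ∧ q.2 ≤ q.1 ∧ q.1 ≤ T} := by
  obtain ⟨C, hC⟩ := exists_forall_memLp_two_and_integral_sq_le pi_pos.le isCompact_Icc hf3c
  exact volterra_kernel_continuous_general T C f f1 f2 f3 hfc hd1 hd2 hd3 hC hfb fn hfn x₀ K hK
end
end
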